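/- Suppose θ ∈ ℝ is irrational, the ℤ-graded vector space V has Vⁿ ≠ 0 for some n ≠ 0, and the connection form ω = ω⁰ + α ∈ Con(A,δ) is not O(T²)-coinvariant (α has a nonzero ℤ²-homogeneous component of degree (m',−m') with m' ≠ 0). Then the left B-module isomorphism L_V : E_A(V) → E_{A_θ}(V) does not intertwine the associated connections: for ∇̄(a⊗v) := D̄(a)⊗v and ∇̄_θ(a⊗v) := D̄_θ(a)⊗v, one has (L¹⊗id) ∘ ∇̄ ≠ ∇̄_θ ∘ L_V. -/

import Mathlib

/-!
On the component of degree `(i, -i)` of a connection form `ω`, the two sides of the intertwining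
relation, evaluated at `a ⊗ v` with `a` of total degree `n` and `v ∈ Vⁿ`, differ only in the phase:
after applying `φ̄_θ` and dividing by the common factor `e^{πiθmn}`, the term `a ωᵢ` carries
`e^{πiθin}` on one side and `e^{-πiθin}` on the other. The ideal `(ker μ_A)²` is invariant under the
torus, so the components can be compared one at a time. If `θin` is not an integer the two phases
are different and every `a` of total degree `n` annihilates `ωᵢ`. On the Hopf fibration these `a`
generate the unit ideal, since `z₁ⁿ` and `z₂ⁿ` (or powers of `z₁*`, `z₂*`) are coprime by the sphere
relation; hence `ωᵢ = 0`.
-/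

set_option synthInstance.maxHeartbeats 1000000
set_option maxHeartbeats 1000000

open scoped TensorProduct
noncomputable section

/-- The total-degree-`n` component of a `ℤ²`-graded module. -/
def totalDeg {A : Type} [AddCommMonoid A] [Module ℂ A]
    (𝒜 : ℤ × ℤ → Submodule ℂ A) (n : ℤ) : Submodule ℂ A :=
  ⨆ (p : ℤ × ℤ) (_ : p.1 + p.2 = n), 𝒜 p

/-- The phase factor `e^{πiθ(m₁m₂' − m₂m₁')}`. -/
def phase (θ : ℝ) (p q : ℤ × ℤ) : ℂ :=
  Complex.exp (Complex.I * ((Real.pi * θ : ℝ) : ℂ) * ((p.1 * q.2 - p.2 * q.1 : ℤ) : ℂ))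

/-- The cotriangular structure phase `R_θ(t_u ⊗ t_w) = e^{−2πiθ(u₁w₂ − u₂w₁)}`. -/
def rphase (θ : ℝ) (u w : ℤ × ℤ) : ℂ :=
  Complex.exp (-(Complex.I * ((2 * Real.pi * θ : ℝ) : ℂ) * ((u.1 * w.2 - u.2 * w.1 : ℤ) : ℂ)))

/-- The phase factor `e^{πiθmn}`. -/
def lphase (θ : ℝ) (m n : ℤ) : ℂ :=
  Complex.exp (Complex.I * ((Real.pi * θ : ℝ) : ℂ) * ((m * n : ℤ) : ℂ))

/-- The `ℤ²`-degree-`p` component of `A ⊗ A`. -/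
def tensorDeg {A : Type} [CommRing A] [Algebra ℂ A]
    (𝒜 : ℤ × ℤ → Submodule ℂ A) (p : ℤ × ℤ) : Submodule ℂ (A ⊗[ℂ] A) :=
  Submodule.span ℂ
    {x : A ⊗[ℂ] A | ∃ (q r : ℤ × ℤ), ∃ a ∈ 𝒜 q, ∃ a' ∈ 𝒜 r, q + r = p ∧ x = a ⊗ₜ[ℂ] a'}

/-- The vector space underlying the associated module `E_A(V) = ⊕ₙ A⁽ⁿ⁾ ⊗ Vⁿ`. -/
def assocModule {A : Type} [CommRing A] [Algebra ℂ A]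
    (𝒜 : ℤ × ℤ → Submodule ℂ A)
    {V : Type} [AddCommGroup V] [Module ℂ V] (𝒱 : ℤ → Submodule ℂ V) :
    Submodule ℂ (A ⊗[ℂ] V) :=
  Submodule.span ℂ
    {x : A ⊗[ℂ] V | ∃ (m n : ℤ) (a : A) (v : V),
      a ∈ 𝒜 (m + n, -m) ∧ v ∈ 𝒱 n ∧ x = a ⊗ₜ[ℂ] v}

section Phases

theorem phase_zero_left (θ : ℝ) (q : ℤ × ℤ) : phase θ 0 q = 1 := by simp [phase]

theorem phase_zero_right (θ : ℝ) (p : ℤ × ℤ) : phase θ p 0 = 1 := by simp [phase]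

theorem phase_add_left (θ : ℝ) (p q r : ℤ × ℤ) :
    phase θ (p + q) r = phase θ p r * phase θ q r := by
  simp only [phase, ← Complex.exp_add, Prod.fst_add, Prod.snd_add]
  congr 1
  push_cast
  ring

theorem phase_add_right (θ : ℝ) (p q r : ℤ × ℤ) :
    phase θ p (q + r) = phase θ p q * phase θ p r := by
  simp only [phase, ← Complex.exp_add, Prod.fst_add, Prod.snd_add]
  congr 1
  push_cast
  ring

theorem phase_eq_one_of_add_eq_zero (θ : ℝ) {p q : ℤ × ℤ} (h : p + q = 0) :
    phase θ p q = 1 := by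
  obtain rfl : q = -p := (neg_eq_of_add_eq_zero_right h).symm
  simp [phase, mul_comm]

theorem phase_eq_one_of_totalDeg_zero (θ : ℝ) {p q : ℤ × ℤ} (hp : p.1 + p.2 = 0)
    (hq : q.1 + q.2 = 0) : phase θ p q = 1 := by
  have h : p.1 * q.2 - p.2 * q.1 = 0 := by
    rw [eq_neg_of_add_eq_zero_right hp, eq_neg_of_add_eq_zero_right hq]
    ring
  simp [phase, h]

theorem phase_eq_lphase (θ : ℝ) (m n i : ℤ) :
    phase θ (m + n, -m) (i, -i) = lphase θ (-i) n := by
  simp only [phase, lphase]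
  congr 3
  ring

theorem lphase_add (θ : ℝ) (m i n : ℤ) :
    lphase θ (m + i) n = lphase θ m n * lphase θ i n := by
  simp only [lphase, ← Complex.exp_add]
  congr 1
  push_cast
  ring

theorem lphase_ne_zero (θ : ℝ) (m n : ℤ) : lphase θ m n ≠ 0 := Complex.exp_ne_zero _

theorem exists_int_of_lphase_eq_lphase_neg {θ : ℝ} {i n : ℤ}
    (h : lphase θ i n = lphase θ (-i) n) : ∃ N : ℤ, θ * (i * n) = N := by
  obtain ⟨N, hN⟩ := Complex.exp_eq_exp_iff_exists_int.mp h
  refine ⟨N, ?_⟩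
  have hπ : 2 * (Real.pi : ℂ) * Complex.I ≠ 0 := Complex.two_pi_I_ne_zero
  have hmul : 2 * (Real.pi : ℂ) * Complex.I * (θ * (i * n)) = 2 * Real.pi * Complex.I * N := by
    push_cast at hN
    linear_combination hN
  exact_mod_cast mul_left_cancel₀ hπ hmul

/-- The character `q ↦ e^{πiθ(p₁q₂ − p₂q₁)}` of `ℤ²` paired with `p` by the phase of the star
product. -/
def phaseChar (θ : ℝ) (p : ℤ × ℤ) : AddChar (ℤ × ℤ) ℂ where
  toFun := phase θ p
  map_zero_eq_one' := phase_zero_right θ p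
  map_add_eq_mul' := phase_add_right θ p

/-- The character `q ↦ 2^{q₂}` of `ℤ²`, which separates the degrees `(n + i, -i)` for fixed `n`,
unlike the phases, which need not do so for rational `θ`. -/
def twoPowSnd : AddChar (ℤ × ℤ) ℂ where
  toFun q := 2 ^ q.2
  map_zero_eq_one' := zpow_zero 2
  map_add_eq_mul' p q := zpow_add₀ two_ne_zero p.2 q.2

theorem twoPowSnd_eq_iff {p q : ℤ × ℤ} : twoPowSnd p = twoPowSnd q ↔ p.2 = q.2 := by
  refine ⟨fun h ↦ ?_, fun h ↦ congrArg ((2 : ℂ) ^ ·) h⟩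
  have hnorm : (2 : ℝ) ^ p.2 = 2 ^ q.2 := by simpa [twoPowSnd] using congrArg norm h
  exact zpow_right_injective₀ two_pos (by norm_num) hnorm

end Phases

section Scaling

variable {ι R A : Type*} [DecidableEq ι] [AddMonoid ι] [CommSemiring R] [Semiring A] [Algebra R A]
  (𝒜 : ι → Submodule R A) [GradedAlgebra 𝒜]

/-- The endomorphism of a graded algebra multiplying the component of degree `i` by `χ i`. -/
def gradedScale (χ : AddChar ι R) : A →ₐ[R] A :=
  (DirectSum.toAlgebra R (fun i ↦ 𝒜 i) (fun i ↦ χ i • (𝒜 i).subtype)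
    (by
      change χ 0 • (1 : A) = 1
      rw [χ.map_zero_eq_one, one_smul])
    (by
      intro i j a b
      change χ (i + j) • ((a : A) * b) = (χ i • (a : A)) * (χ j • (b : A))
      rw [χ.map_add_eq_mul, smul_mul_smul_comm])).comp
    (DirectSum.decomposeAlgEquiv 𝒜 : A →ₐ[R] _)

theorem gradedScale_apply_of_mem (χ : AddChar ι R) {i : ι} {a : A} (ha : a ∈ 𝒜 i) :
    gradedScale 𝒜 χ a = χ i • a := by
  have h : DirectSum.decomposeAlgEquiv 𝒜 a = DirectSum.of (fun i ↦ 𝒜 i) i ⟨a, ha⟩ :=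
    DirectSum.decompose_of_mem 𝒜 ha
  rw [gradedScale, AlgHom.comp_apply]
  exact (congrArg _ h).trans (DirectSum.toAddMonoid_of
    (fun i ↦ (χ i • (𝒜 i).subtype).toAddMonoidHom) i ⟨a, ha⟩)

end Scaling

theorem eq_zero_of_sum_eq_zero_of_mem_eigenspace {κ R M : Type*} [CommRing R] [IsDomain R]
    [AddCommGroup M] [Module R M] [Module.IsTorsionFree R M] (f : Module.End R M) {s : Finset κ}
    {μ : κ → R} (hμ : Set.InjOn μ s) {x : κ → M} (hx : ∀ i ∈ s, x i ∈ f.eigenspace (μ i))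
    (hsum : ∑ i ∈ s, x i = 0) : ∀ i ∈ s, x i = 0 := by
  have hind : iSupIndep fun i : s ↦ f.eigenspace (μ i) :=
    (Module.End.eigenspaces_iSupIndep f).comp hμ.injective
  rw [iSupIndep_iff_finsetSum_eq_zero_imp_eq_zero] at hind
  intro i hi
  exact hind Finset.univ (fun j ↦ x j) (fun j _ ↦ hx j j.2)
    (by rwa [Finset.univ_eq_attach, Finset.sum_attach s x]) ⟨i, hi⟩ (Finset.mem_univ _)

theorem tmul_left_injective_of_ne_zero {K M V : Type*} [Field K] [AddCommGroup M] [Module K M]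
    [AddCommGroup V] [Module K V] {v : V} (hv : v ≠ 0) :
    Function.Injective fun x : M ↦ x ⊗ₜ[K] v := by
  obtain ⟨f, hf⟩ := Module.Projective.exists_dual_eq_one K hv
  intro x y hxy
  simpa [hf] using congrArg (fun t ↦ TensorProduct.rid K M (f.lTensor M t)) hxy

theorem ker_mul'_mul_self (R S : Type*) [CommRing R] [CommRing S] [Algebra R S] :
    LinearMap.ker (LinearMap.mul' R S) * LinearMap.ker (LinearMap.mul' R S)
      = (KaehlerDifferential.ideal R S ^ 2).restrictScalars R := by
  have hker : LinearMap.ker (LinearMap.mul' R S)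
      = (KaehlerDifferential.ideal R S).restrictScalars R := rfl
  rw [hker, pow_two, Submodule.restrictScalars_mul]

theorem map_mem_kaehlerIdeal_pow {R S T : Type*} [CommRing R] [CommRing S] [CommRing T]
    [Algebra R S] [Algebra R T] (f : S →ₐ[R] T) (n : ℕ) {x : S ⊗[R] S}
    (hx : x ∈ KaehlerDifferential.ideal R S ^ n) :
    Algebra.TensorProduct.map f f x ∈ KaehlerDifferential.ideal R T ^ n := by
  have hcomm : (Algebra.TensorProduct.lmul' R).comp (Algebra.TensorProduct.map f f)
      = f.comp (Algebra.TensorProduct.lmul' R) := by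
    ext <;> simp
  have hle : (KaehlerDifferential.ideal R S).map (Algebra.TensorProduct.map f f)
      ≤ KaehlerDifferential.ideal R T := by
    refine Ideal.map_le_iff_le_comap.mpr fun y hy ↦ ?_
    have hy0 : Algebra.TensorProduct.lmul' R y = 0 := hy
    exact (DFunLike.congr_fun hcomm y).trans ((congrArg f hy0).trans (map_zero f))
  have hmem := Ideal.mem_map_of_mem (Algebra.TensorProduct.map f f) hx
  rw [Ideal.map_pow] at hmem
  exact Ideal.pow_right_mono hle n hmem

theorem map_mulLeft_id_apply {R S M : Type*} [CommSemiring R] [Semiring S] [Algebra R S]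
    [AddCommMonoid M] [Module R M] (a : S) (x : S ⊗[R] M) :
    TensorProduct.map (LinearMap.mulLeft R a) LinearMap.id x = a • x := by
  induction x with
  | zero => rw [map_zero, smul_zero]
  | tmul b m => rfl
  | add x y hx hy => rw [map_add, smul_add, hx, hy]

theorem linearMap_eq_of_eq_on_homogeneous_tmul {ι κ R M N P : Type*} [DecidableEq ι]
    [DecidableEq κ] [CommSemiring R] [AddCommMonoid M] [AddCommMonoid N] [AddCommMonoid P]
    [Module R M] [Module R N] [Module R P] (ℳ : ι → Submodule R M) (𝒩 : κ → Submodule R N)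
    [DirectSum.Decomposition ℳ] [DirectSum.Decomposition 𝒩] {f g : M ⊗[R] N →ₗ[R] P}
    (h : ∀ i j, ∀ x ∈ ℳ i, ∀ y ∈ 𝒩 j, f (x ⊗ₜ[R] y) = g (x ⊗ₜ[R] y)) : f = g := by
  refine TensorProduct.ext ?_
  refine DirectSum.decompose_lhom_ext ℳ fun i ↦ LinearMap.ext fun x ↦ ?_
  refine DirectSum.decompose_lhom_ext 𝒩 fun j ↦ LinearMap.ext fun y ↦ ?_
  exact h i j x x.2 y y.2

theorem exists_sum_eq_add_sum_of_mem {κ M S : Type*} [AddCommMonoid M] [SetLike S M]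
    [AddSubmonoidClass S M] {W : κ → S} {i₀ : κ} {x : M} (hx : x ∈ W i₀)
    {s : Finset κ} {c : κ → M} (hc : ∀ i ∈ s, c i ∈ W i) :
    ∃ (t : Finset κ) (d : κ → M), x + ∑ i ∈ s, c i = ∑ i ∈ t, d i ∧ (∀ i ∈ t, d i ∈ W i) ∧
      ∀ i ∈ s, i ≠ i₀ → i ∈ t ∧ d i = c i := by
  classical
  refine ⟨insert i₀ s, fun i ↦ (if i = i₀ then x else 0) + if i ∈ s then c i else 0, ?_, ?_, ?_⟩
  · simp [Finset.sum_add_distrib, Finset.sum_ite_mem,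
      Finset.inter_eq_right.mpr (Finset.subset_insert i₀ s)]
  · intro i _
    refine add_mem ?_ ?_
    · split_ifs with hi
      · exact hi ▸ hx
      · exact zero_mem _
    · split_ifs with hi
      · exact hc i hi
      · exact zero_mem _
  · intro i hi hi₀
    simp [hi, hi₀]

section Graded

variable {A : Type} [CommRing A] [Algebra ℂ A] {𝒜 : ℤ × ℤ → Submodule ℂ A}

theorem le_totalDeg {p : ℤ × ℤ} {n : ℤ} (h : p.1 + p.2 = n) : 𝒜 p ≤ totalDeg 𝒜 n :=
  le_iSup₂_of_le (f := fun (p : ℤ × ℤ) (_ : p.1 + p.2 = n) ↦ 𝒜 p) p h le_rfl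

theorem tmul_mem_tensorDeg {p q : ℤ × ℤ} {a b : A} (ha : a ∈ 𝒜 p) (hb : b ∈ 𝒜 q) :
    a ⊗ₜ[ℂ] b ∈ tensorDeg 𝒜 (p + q) :=
  Submodule.subset_span ⟨p, q, a, ha, b, hb, rfl, rfl⟩

theorem smul_mem_tensorDeg [SetLike.GradedMonoid 𝒜] {p q : ℤ × ℤ} {a : A} (ha : a ∈ 𝒜 p)
    {x : A ⊗[ℂ] A} (hx : x ∈ tensorDeg 𝒜 q) : a • x ∈ tensorDeg 𝒜 (p + q) := by
  refine (Submodule.span_le (p := (tensorDeg 𝒜 (p + q)).comap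
    (Algebra.lsmul ℂ ℂ (A ⊗[ℂ] A) a))).mpr ?_ hx
  rintro _ ⟨q, r, b, hb, c, hc, rfl, rfl⟩
  simpa [add_assoc, TensorProduct.smul_tmul'] using
    tmul_mem_tensorDeg (SetLike.mul_mem_graded ha hb) hc

theorem smul_mem_tensorDeg_antidiagonal [SetLike.GradedMonoid 𝒜] {m n i : ℤ} {a : A}
    (ha : a ∈ 𝒜 (m + n, -m)) {x : A ⊗[ℂ] A} (hx : x ∈ tensorDeg 𝒜 (i, -i)) :
    a • x ∈ tensorDeg 𝒜 (m + i + n, -(m + i)) := by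
  have hdeg : ((m + n, -m) : ℤ × ℤ) + (i, -i) = (m + i + n, -(m + i)) := by
    ext <;> simp only [Prod.fst_add, Prod.snd_add] <;> ring
  exact hdeg ▸ smul_mem_tensorDeg ha hx

theorem tmul_sub_mul_tmul_one_mem_tensorDeg [SetLike.GradedMonoid 𝒜] {p q r : ℤ × ℤ} {a b : A}
    (ha : a ∈ 𝒜 p) (hb : b ∈ 𝒜 q) (h : p + q = r) :
    a ⊗ₜ[ℂ] b - (a * b) ⊗ₜ[ℂ] (1 : A) ∈ tensorDeg 𝒜 r := by
  subst h
  refine sub_mem (tmul_mem_tensorDeg ha hb) ?_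
  simpa using tmul_mem_tensorDeg (SetLike.mul_mem_graded ha hb) (SetLike.one_mem_graded 𝒜)

theorem one_tmul_sub_tmul_one_mem_tensorDeg [SetLike.GradedMonoid 𝒜] {p : ℤ × ℤ} {a : A}
    (ha : a ∈ 𝒜 p) : (1 : A) ⊗ₜ[ℂ] a - a ⊗ₜ[ℂ] (1 : A) ∈ tensorDeg 𝒜 p := by
  simpa using tmul_sub_mul_tmul_one_mem_tensorDeg (SetLike.one_mem_graded 𝒜) ha (zero_add p)

variable (𝒜) in
/-- The diagonal action on `A ⊗ A` of a character of `ℤ²`, that is, of a point of the torus. -/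
def tensorScale [GradedAlgebra 𝒜] (χ : AddChar (ℤ × ℤ) ℂ) : A ⊗[ℂ] A →ₐ[ℂ] A ⊗[ℂ] A :=
  Algebra.TensorProduct.map (gradedScale 𝒜 χ) (gradedScale 𝒜 χ)

theorem tensorScale_tmul [GradedAlgebra 𝒜] (χ : AddChar (ℤ × ℤ) ℂ) {p q : ℤ × ℤ} {a b : A}
    (ha : a ∈ 𝒜 p) (hb : b ∈ 𝒜 q) :
    tensorScale 𝒜 χ (a ⊗ₜ[ℂ] b) = χ (p + q) • a ⊗ₜ[ℂ] b := by
  rw [tensorScale, Algebra.TensorProduct.map_tmul, gradedScale_apply_of_mem 𝒜 χ ha,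
    gradedScale_apply_of_mem 𝒜 χ hb, TensorProduct.smul_tmul_smul, χ.map_add_eq_mul]

theorem tensorScale_apply_of_mem [GradedAlgebra 𝒜] (χ : AddChar (ℤ × ℤ) ℂ) {p : ℤ × ℤ}
    {x : A ⊗[ℂ] A} (hx : x ∈ tensorDeg 𝒜 p) : tensorScale 𝒜 χ x = χ p • x := by
  refine LinearMap.eqOn_span (f := (tensorScale 𝒜 χ).toLinearMap)
    (g := χ p • LinearMap.id) ?_ hx
  rintro _ ⟨q, r, a, ha, b, hb, rfl, rfl⟩
  exact tensorScale_tmul χ ha hb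

theorem mem_of_sum_mem_of_mem_tensorDeg [GradedAlgebra 𝒜] {N : Submodule ℂ (A ⊗[ℂ] A)}
    (χ : AddChar (ℤ × ℤ) ℂ) (hN : N ≤ N.comap (tensorScale 𝒜 χ).toLinearMap) {κ : Type*}
    {s : Finset κ} {p : κ → ℤ × ℤ} (hp : Set.InjOn (fun i ↦ χ (p i)) s) {x : κ → A ⊗[ℂ] A}
    (hx : ∀ i ∈ s, x i ∈ tensorDeg 𝒜 (p i)) (hsum : ∑ i ∈ s, x i ∈ N) : ∀ i ∈ s, x i ∈ N := by
  have hzero := eq_zero_of_sum_eq_zero_of_mem_eigenspace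
    (N.mapQ N (tensorScale 𝒜 χ).toLinearMap hN) hp (x := fun i ↦ N.mkQ (x i))
    (fun i hi ↦ Module.End.mem_eigenspace_iff.mpr
      (congrArg N.mkQ (tensorScale_apply_of_mem χ (hx i hi))))
    (by rwa [← map_sum, Submodule.mkQ_apply, Submodule.Quotient.mk_eq_zero])
  exact fun i hi ↦ (Submodule.Quotient.mk_eq_zero N).mp (hzero i hi)

theorem mem_of_forall_totalDeg_smul_mem {M : Type*} [AddCommGroup M] [Module A M] {n : ℤ}
    (hspan : Ideal.span (totalDeg 𝒜 n : Set A) = ⊤) {N : Submodule A M} {x : M}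
    (h : ∀ m, ∀ a ∈ 𝒜 (m + n, -m), a • x ∈ N) : x ∈ N := by
  let I : Ideal A := N.comap (LinearMap.toSpanSingleton A M x)
  have hle : totalDeg 𝒜 n ≤ I.restrictScalars ℂ := by
    refine iSup₂_le fun p hp a ha ↦ h (-p.2) a ?_
    rwa [neg_neg, show -p.2 + n = p.1 by omega]
  have hI : (1 : A) ∈ I := Ideal.span_le.mpr hle (hspan ▸ Submodule.mem_top)
  simpa [I] using hI

theorem span_totalDeg_eq_top_of_isCoprime [SetLike.GradedMonoid 𝒜] {p q : ℤ × ℤ} {z w : A}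
    (hz : z ∈ 𝒜 p) (hw : w ∈ 𝒜 q) {d : ℤ} (hp : p.1 + p.2 = d) (hq : q.1 + q.2 = d)
    (hzw : IsCoprime z w) (N : ℕ) : Ideal.span (totalDeg 𝒜 (N * d) : Set A) = ⊤ := by
  have hpow {r : ℤ × ℤ} {y : A} (hy : y ∈ 𝒜 r) (hr : r.1 + r.2 = d) :
      y ^ N ∈ Ideal.span (totalDeg 𝒜 (N * d) : Set A) := by
    refine Ideal.subset_span (le_totalDeg ?_ (SetLike.pow_mem_graded N hy))
    simp [← hr, mul_add]
  obtain ⟨u, v, huv⟩ := hzw.pow (m := N) (n := N)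
  rw [Ideal.eq_top_iff_one, ← huv]
  exact add_mem (Ideal.mul_mem_left _ u (hpow hz hp)) (Ideal.mul_mem_left _ v (hpow hw hq))

theorem span_totalDeg_eq_top_of_sphere_relation [SetLike.GradedMonoid 𝒜] {z1 z2 z1s z2s : A}
    (hz1 : z1 ∈ 𝒜 (1, 0)) (hz2 : z2 ∈ 𝒜 (0, 1)) (hz1s : z1s ∈ 𝒜 (-1, 0))
    (hz2s : z2s ∈ 𝒜 (0, -1)) (hrel : z1s * z1 + z2s * z2 = 1) (n : ℤ) :
    Ideal.span (totalDeg 𝒜 n : Set A) = ⊤ := by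
  obtain ⟨N, rfl | rfl⟩ := n.eq_nat_or_neg
  · simpa using span_totalDeg_eq_top_of_isCoprime hz1 hz2 rfl rfl ⟨z1s, z2s, hrel⟩ N
  · have hco : IsCoprime z1s z2s := ⟨z1, z2, by rwa [mul_comm z1, mul_comm z2]⟩
    simpa using span_totalDeg_eq_top_of_isCoprime hz1s hz2s rfl rfl hco N

/-- The representative in `A ⊗ A` of `ω⁰ = z₁* dz₁ + z₂* dz₂`. -/
def canonicalConnection (z1 z2 z1s z2s : A) : A ⊗[ℂ] A :=
  z1s ⊗ₜ[ℂ] z1 - (z1s * z1) ⊗ₜ[ℂ] (1 : A) + (z2s ⊗ₜ[ℂ] z2 - (z2s * z2) ⊗ₜ[ℂ] (1 : A))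

theorem canonicalConnection_mem_tensorDeg_zero [SetLike.GradedMonoid 𝒜] {p q : ℤ × ℤ}
    {z1 z2 z1s z2s : A} (hz1 : z1 ∈ 𝒜 p) (hz2 : z2 ∈ 𝒜 q) (hz1s : z1s ∈ 𝒜 (-p))
    (hz2s : z2s ∈ 𝒜 (-q)) : canonicalConnection z1 z2 z1s z2s ∈ tensorDeg 𝒜 0 :=
  add_mem (tmul_sub_mul_tmul_one_mem_tensorDeg hz1s hz1 (neg_add_cancel p))
    (tmul_sub_mul_tmul_one_mem_tensorDeg hz2s hz2 (neg_add_cancel q))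

variable (𝒜) in
/-- `stp` is the star product `⋆_θ` on `A`; this determines it, as `A` is the sum of the `𝒜 p`. -/
def IsStarProduct (θ : ℝ) (stp : A →ₗ[ℂ] A →ₗ[ℂ] A) : Prop :=
  ∀ p q : ℤ × ℤ, ∀ a ∈ 𝒜 p, ∀ b ∈ 𝒜 q, stp a b = phase θ p q • (a * b)

variable (𝒜) in
/-- `φ` is the phase map `φ_θ` of `A ⊗ A`, which relates the deformed to the classical one-forms. -/
def IsPhaseMap (θ : ℝ) (φ : A ⊗[ℂ] A →ₗ[ℂ] A ⊗[ℂ] A) : Prop :=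
  ∀ p q : ℤ × ℤ, ∀ a ∈ 𝒜 p, ∀ b ∈ 𝒜 q, φ (a ⊗ₜ[ℂ] b) = phase θ p q • (a ⊗ₜ[ℂ] b)

variable {θ : ℝ} {stp : A →ₗ[ℂ] A →ₗ[ℂ] A} {φ : A ⊗[ℂ] A →ₗ[ℂ] A ⊗[ℂ] A}

theorem IsStarProduct.apply_one [SetLike.GradedMonoid 𝒜] (hstp : IsStarProduct 𝒜 θ stp)
    {p : ℤ × ℤ} {a : A} (ha : a ∈ 𝒜 p) : stp a 1 = a := by
  rw [hstp p 0 a ha 1 (SetLike.one_mem_graded 𝒜), phase_zero_right, one_smul, mul_one]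

theorem IsStarProduct.apply_eq_mul (hstp : IsStarProduct 𝒜 θ stp) {p q : ℤ × ℤ}
    (hpq : p + q = 0) {a b : A} (ha : a ∈ 𝒜 p) (hb : b ∈ 𝒜 q) : stp a b = a * b := by
  rw [hstp p q a ha b hb, phase_eq_one_of_add_eq_zero θ hpq, one_smul]

theorem IsStarProduct.canonicalConnection_eq [SetLike.GradedMonoid 𝒜]
    (hstp : IsStarProduct 𝒜 θ stp) {p q : ℤ × ℤ} {z1 z2 z1s z2s : A} (hz1 : z1 ∈ 𝒜 p)
    (hz2 : z2 ∈ 𝒜 q) (hz1s : z1s ∈ 𝒜 (-p)) (hz2s : z2s ∈ 𝒜 (-q)) :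
    (stp z1s 1) ⊗ₜ[ℂ] z1 - (stp z1s z1) ⊗ₜ[ℂ] (1 : A)
        + ((stp z2s 1) ⊗ₜ[ℂ] z2 - (stp z2s z2) ⊗ₜ[ℂ] (1 : A))
      = canonicalConnection z1 z2 z1s z2s := by
  rw [hstp.apply_one hz1s, hstp.apply_one hz2s, hstp.apply_eq_mul (neg_add_cancel p) hz1s hz1,
    hstp.apply_eq_mul (neg_add_cancel q) hz2s hz2, canonicalConnection]

theorem IsPhaseMap.apply_of_mem_tensorDeg_zero (hφ : IsPhaseMap 𝒜 θ φ) {x : A ⊗[ℂ] A}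
    (hx : x ∈ tensorDeg 𝒜 0) : φ x = x := by
  refine LinearMap.eqOn_span (g := LinearMap.id) ?_ hx
  rintro _ ⟨p, q, a, ha, b, hb, hpq, rfl⟩
  rw [hφ p q a ha b hb, phase_eq_one_of_add_eq_zero θ hpq, one_smul, LinearMap.id_apply]

theorem IsPhaseMap.apply_tmul_one [GradedAlgebra 𝒜] (hφ : IsPhaseMap 𝒜 θ φ) (a : A) :
    φ (a ⊗ₜ[ℂ] 1) = a ⊗ₜ[ℂ] 1 := by
  induction a using DirectSum.Decomposition.inductionOn 𝒜 with
  | zero => rw [TensorProduct.zero_tmul, map_zero]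
  | homogeneous a =>
    rw [hφ _ 0 _ a.2 1 (SetLike.one_mem_graded 𝒜), phase_zero_right, one_smul]
  | add a b ha hb => rw [TensorProduct.add_tmul, map_add, ha, hb]

theorem IsPhaseMap.apply_one_tmul_sub_tmul_one [GradedAlgebra 𝒜] (hφ : IsPhaseMap 𝒜 θ φ)
    {p : ℤ × ℤ} {a : A} (ha : a ∈ 𝒜 p) :
    φ ((1 : A) ⊗ₜ[ℂ] a - a ⊗ₜ[ℂ] (1 : A)) = (1 : A) ⊗ₜ[ℂ] a - a ⊗ₜ[ℂ] (1 : A) := by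
  rw [map_sub, hφ.apply_tmul_one, hφ 0 p 1 (SetLike.one_mem_graded 𝒜) a ha, phase_zero_left,
    one_smul]

theorem IsPhaseMap.apply_tmul_of_mem_totalDeg_zero (hφ : IsPhaseMap 𝒜 θ φ) {b b' : A}
    (hb : b ∈ totalDeg 𝒜 0) (hb' : b' ∈ totalDeg 𝒜 0) : φ (b ⊗ₜ[ℂ] b') = b ⊗ₜ[ℂ] b' := by
  let F : Submodule ℂ (A ⊗[ℂ] A) := LinearMap.eqLocus φ LinearMap.id
  suffices totalDeg 𝒜 0 ≤ F.comap ((TensorProduct.mk ℂ A A).flip b') from this hb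
  refine iSup₂_le fun p hp c hc ↦ ?_
  suffices totalDeg 𝒜 0 ≤ F.comap (TensorProduct.mk ℂ A A c) from this hb'
  refine iSup₂_le fun q hq c' hc' ↦ ?_
  change φ (c ⊗ₜ[ℂ] c') = c ⊗ₜ[ℂ] c'
  rw [hφ p q c hc c' hc', phase_eq_one_of_totalDeg_zero θ hp hq, one_smul]

theorem IsPhaseMap.apply_of_mem_span_base [GradedAlgebra 𝒜] (hφ : IsPhaseMap 𝒜 θ φ)
    {x : A ⊗[ℂ] A}
    (hx : x ∈ Submodule.span ℂ {y : A ⊗[ℂ] A | ∃ b ∈ totalDeg 𝒜 0, ∃ b' ∈ totalDeg 𝒜 0,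
      y = b ⊗ₜ[ℂ] b' - (b * b') ⊗ₜ[ℂ] (1 : A)}) : φ x = x := by
  refine LinearMap.eqOn_span (g := LinearMap.id) ?_ hx
  rintro _ ⟨b, hb, b', hb', rfl⟩
  rw [map_sub, hφ.apply_tmul_of_mem_totalDeg_zero hb hb', hφ.apply_tmul_one, LinearMap.id_apply]

theorem IsPhaseMap.apply_map_star [GradedAlgebra 𝒜] (hφ : IsPhaseMap 𝒜 θ φ)
    (hstp : IsStarProduct 𝒜 θ stp) {p : ℤ × ℤ} {a : A} (ha : a ∈ 𝒜 p) (x : A ⊗[ℂ] A) :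
    φ (TensorProduct.map (stp a) LinearMap.id x)
      = a • tensorScale 𝒜 (phaseChar θ p) (φ x) := by
  suffices φ ∘ₗ TensorProduct.map (stp a) LinearMap.id
      = Algebra.lsmul ℂ ℂ _ a ∘ₗ (tensorScale 𝒜 (phaseChar θ p)).toLinearMap ∘ₗ φ from
    DFunLike.congr_fun this x
  refine linearMap_eq_of_eq_on_homogeneous_tmul 𝒜 𝒜 fun q r b hb c hc ↦ ?_
  have hleft : φ (stp a b ⊗ₜ[ℂ] c)
      = (phase θ p q * phase θ (p + q) r) • (a * b) ⊗ₜ[ℂ] c := by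
    rw [hstp p q a ha b hb, ← TensorProduct.smul_tmul', map_smul,
      hφ (p + q) r _ (SetLike.mul_mem_graded ha hb) c hc, smul_smul]
  have hright : a • tensorScale 𝒜 (phaseChar θ p) (φ (b ⊗ₜ[ℂ] c))
      = (phase θ q r * phase θ p (q + r)) • (a * b) ⊗ₜ[ℂ] c := by
    rw [hφ q r b hb c hc, map_smul, tensorScale_tmul _ hb hc, smul_comm a, smul_comm a,
      TensorProduct.smul_tmul', smul_smul]
    rfl
  refine hleft.trans (Eq.trans ?_ hright.symm)
  rw [phase_add_left, phase_add_right]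
  congr 1
  ring

section Connection

variable [GradedAlgebra 𝒜] {ω : A ⊗[ℂ] A} {s : Finset ℤ} {ωc : ℤ → A ⊗[ℂ] A} {m n : ℤ} {a : A}

theorem IsPhaseMap.apply_connection (hφ : IsPhaseMap 𝒜 θ φ) (hstp : IsStarProduct 𝒜 θ stp)
    {ωθ : A ⊗[ℂ] A} (hωθ : φ ωθ = ∑ i ∈ s, ωc i) (hωc : ∀ i ∈ s, ωc i ∈ tensorDeg 𝒜 (i, -i))
    (ha : a ∈ 𝒜 (m + n, -m)) :
    φ ((1 : A) ⊗ₜ[ℂ] a - a ⊗ₜ[ℂ] (1 : A)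
        - (n : ℂ) • TensorProduct.map (stp a) LinearMap.id ωθ)
      = (1 : A) ⊗ₜ[ℂ] a - a ⊗ₜ[ℂ] (1 : A)
        - (n : ℂ) • ∑ i ∈ s, lphase θ (-i) n • a • ωc i := by
  have hterm (i : ℤ) (hi : i ∈ s) :
      a • tensorScale 𝒜 (phaseChar θ (m + n, -m)) (ωc i) = lphase θ (-i) n • a • ωc i := by
    rw [tensorScale_apply_of_mem _ (hωc i hi), smul_comm, ← phase_eq_lphase θ m n i]
    rfl
  rw [map_sub, map_smul, hφ.apply_one_tmul_sub_tmul_one ha, hφ.apply_map_star hstp ha, hωθ,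
    map_sum, Finset.smul_sum, Finset.sum_congr rfl hterm]

/-- Here `Λ` is the composite `φ̄_θ ∘ L¹`. -/
theorem map_connection_eq_lphase_smul {N : Submodule ℂ (A ⊗[ℂ] A)}
    {Λ : (A ⊗[ℂ] A) ⧸ N →ₗ[ℂ] (A ⊗[ℂ] A) ⧸ N}
    (hΛ : ∀ m n : ℤ, ∀ x ∈ tensorDeg 𝒜 (m + n, -m), Λ (N.mkQ x) = lphase θ m n • N.mkQ x)
    (hωc : ∀ i ∈ s, ωc i ∈ tensorDeg 𝒜 (i, -i)) (ha : a ∈ 𝒜 (m + n, -m)) :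
    Λ (N.mkQ ((1 : A) ⊗ₜ[ℂ] a - a ⊗ₜ[ℂ] (1 : A) - (n : ℂ) • a • ∑ i ∈ s, ωc i))
      = lphase θ m n • N.mkQ ((1 : A) ⊗ₜ[ℂ] a - a ⊗ₜ[ℂ] (1 : A)
        - (n : ℂ) • ∑ i ∈ s, lphase θ i n • a • ωc i) := by
  have hterm (i : ℤ) (hi : i ∈ s) :
      Λ (N.mkQ (a • ωc i)) = lphase θ m n • lphase θ i n • N.mkQ (a • ωc i) := by
    rw [hΛ (m + i) n _ (smul_mem_tensorDeg_antidiagonal ha (hωc i hi)), lphase_add, mul_smul]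
  rw [map_sub N.mkQ, map_sub Λ, hΛ m n _ (one_tmul_sub_tmul_one_mem_tensorDeg ha), map_smul,
    map_smul, Finset.smul_sum, map_sum, map_sum, Finset.sum_congr rfl hterm, ← Finset.smul_sum,
    smul_comm (n : ℂ), ← smul_sub, map_sub N.mkQ (_ - _), map_smul, map_sum]
  simp only [map_smul]

theorem smul_component_mem_of_intertwined (hφ : IsPhaseMap 𝒜 θ φ)
    (hstp : IsStarProduct 𝒜 θ stp) {N Nθ : Submodule ℂ (A ⊗[ℂ] A)}
    (hN : N ≤ N.comap (tensorScale 𝒜 twoPowSnd).toLinearMap)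
    {φbar : (A ⊗[ℂ] A) ⧸ Nθ →ₗ[ℂ] (A ⊗[ℂ] A) ⧸ N}
    (hφbar : ∀ x, φbar (Nθ.mkQ x) = N.mkQ (φ x))
    {L1 : (A ⊗[ℂ] A) ⧸ N →ₗ[ℂ] (A ⊗[ℂ] A) ⧸ Nθ}
    (hL1 : ∀ m n : ℤ, ∀ x ∈ tensorDeg 𝒜 (m + n, -m),
      φbar (L1 (N.mkQ x)) = lphase θ m n • N.mkQ x)
    (hω : ω = ∑ i ∈ s, ωc i) (hωc : ∀ i ∈ s, ωc i ∈ tensorDeg 𝒜 (i, -i)) {ωθ : A ⊗[ℂ] A}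
    (hωθ : φ ωθ = ω) (hn : n ≠ 0) {k : ℤ} (hk : k ∈ s)
    (hphase : lphase θ k n ≠ lphase θ (-k) n) (ha : a ∈ 𝒜 (m + n, -m))
    (hcomm : L1 (N.mkQ ((1 : A) ⊗ₜ[ℂ] a - a ⊗ₜ[ℂ] (1 : A) - (n : ℂ) • a • ω))
      = lphase θ m n • Nθ.mkQ ((1 : A) ⊗ₜ[ℂ] a - a ⊗ₜ[ℂ] (1 : A)
        - (n : ℂ) • TensorProduct.map (stp a) LinearMap.id ωθ)) :
    a • ωc k ∈ N := by
  subst hω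
  have hn' : (n : ℂ) ≠ 0 := Int.cast_ne_zero.mpr hn
  have heq := congrArg φbar hcomm
  rw [map_smul, hφbar, hφ.apply_connection hstp hωθ hωc ha] at heq
  have hsum := (map_connection_eq_lphase_smul (Λ := φbar ∘ₗ L1) hL1 hωc ha).symm.trans heq
  replace hsum := (Submodule.Quotient.eq N).mp (smul_right_injective _ (lphase_ne_zero θ m n) hsum)
  rw [sub_sub_sub_cancel_left, ← smul_sub, N.smul_mem_iff hn', ← Finset.sum_sub_distrib] at hsum
  simp only [← sub_smul] at hsum
  have hinj : Set.InjOn (fun i ↦ twoPowSnd (m + i + n, -(m + i))) s := by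
    intro i _ j _ hij
    simpa using twoPowSnd_eq_iff.mp hij
  have hmem := mem_of_sum_mem_of_mem_tensorDeg twoPowSnd hN hinj (fun i hi ↦
    Submodule.smul_mem _ _ (smul_mem_tensorDeg_antidiagonal ha (hωc i hi))) hsum k hk
  exact (N.smul_mem_iff (sub_ne_zero.mpr hphase.symm)).mp hmem

end Connection

end Graded

theorem associated_connections_not_intertwined_general
    {A : Type} [CommRing A] [Algebra ℂ A] {𝒜 : ℤ × ℤ → Submodule ℂ A} [GradedAlgebra 𝒜]
    {θ : ℝ} {stp : A →ₗ[ℂ] A →ₗ[ℂ] A} (hstp : IsStarProduct 𝒜 θ stp)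
    {φ : A ⊗[ℂ] A →ₗ[ℂ] A ⊗[ℂ] A} (hφ : IsPhaseMap 𝒜 θ φ)
    {V : Type} [AddCommGroup V] [Module ℂ V] {𝒱 : ℤ → Submodule ℂ V}
    {L : A ⊗[ℂ] V →ₗ[ℂ] A ⊗[ℂ] V}
    (hL : ∀ (m n : ℤ) (a : A) (v : V), a ∈ 𝒜 (m + n, -m) → v ∈ 𝒱 n →
      L (a ⊗ₜ[ℂ] v) = lphase θ m n • (a ⊗ₜ[ℂ] v))
    {n : ℤ} (hn : 𝒱 n ≠ ⊥) (hspan : Ideal.span (totalDeg 𝒜 n : Set A) = ⊤)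
    {K2 K2θ : Submodule ℂ (A ⊗[ℂ] A)}
    (hK2 : K2 = LinearMap.ker (LinearMap.mul' ℂ A) * LinearMap.ker (LinearMap.mul' ℂ A))
    {ω ωθ : A ⊗[ℂ] A} (hωθ : φ ωθ = ω)
    {s : Finset ℤ} {ωc : ℤ → A ⊗[ℂ] A} (hω : ω = ∑ i ∈ s, ωc i)
    (hωc : ∀ i ∈ s, ωc i ∈ tensorDeg 𝒜 (i, -i))
    {k : ℤ} (hk : k ∈ s) (hωk : K2.mkQ (ωc k) ≠ 0) (hθ : ∀ N : ℤ, θ * (k * n) ≠ N)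
    {D : A →ₗ[ℂ] (A ⊗[ℂ] A) ⧸ K2}
    (hD : ∀ n : ℤ, ∀ a ∈ totalDeg 𝒜 n,
      D a = K2.mkQ ((1 : A) ⊗ₜ[ℂ] a - a ⊗ₜ[ℂ] (1 : A) - (n : ℂ) • a • ω))
    {Dθ : A →ₗ[ℂ] (A ⊗[ℂ] A) ⧸ K2θ}
    (hDθ : ∀ n : ℤ, ∀ a ∈ totalDeg 𝒜 n,
      Dθ a = K2θ.mkQ ((1 : A) ⊗ₜ[ℂ] a - a ⊗ₜ[ℂ] (1 : A)
        - (n : ℂ) • TensorProduct.map (stp a) LinearMap.id ωθ))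
    {φbar : (A ⊗[ℂ] A) ⧸ K2θ →ₗ[ℂ] (A ⊗[ℂ] A) ⧸ K2}
    (hφbar : ∀ x, φbar (K2θ.mkQ x) = K2.mkQ (φ x))
    {L1 : (A ⊗[ℂ] A) ⧸ K2 →ₗ[ℂ] (A ⊗[ℂ] A) ⧸ K2θ}
    (hL1 : ∀ m n : ℤ, ∀ x ∈ tensorDeg 𝒜 (m + n, -m),
      φbar (L1 (K2.mkQ x)) = lphase θ m n • K2.mkQ x) :
    ∃ ξ ∈ assocModule 𝒜 𝒱,
      TensorProduct.map L1 (LinearMap.id : V →ₗ[ℂ] V)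
          (TensorProduct.map D (LinearMap.id : V →ₗ[ℂ] V) ξ)
        ≠ TensorProduct.map Dθ (LinearMap.id : V →ₗ[ℂ] V) (L ξ) := by
  by_contra! hcomm
  obtain ⟨v, hv, hv0⟩ := (Submodule.ne_bot_iff _).mp hn
  have hn0 : n ≠ 0 := by
    rintro rfl
    exact hθ 0 (by simp)
  have hphase : lphase θ k n ≠ lphase θ (-k) n := fun h ↦
    let ⟨N, hN⟩ := exists_int_of_lphase_eq_lphase_neg h
    hθ N hN
  rw [ker_mul'_mul_self] at hK2
  have hscale : K2 ≤ K2.comap (tensorScale 𝒜 twoPowSnd).toLinearMap := by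
    rw [hK2]
    exact fun x hx ↦ map_mem_kaehlerIdeal_pow _ 2 hx
  refine hωk ((Submodule.Quotient.mk_eq_zero K2).mpr ?_)
  suffices ∀ m, ∀ a ∈ 𝒜 (m + n, -m), a • ωc k ∈ K2 by
    rw [hK2] at this ⊢
    exact mem_of_forall_totalDeg_smul_mem hspan
      (N := (KaehlerDifferential.ideal ℂ A ^ 2).restrictScalars A) this
  intro m a ha
  have hDa : L1 (D a) = lphase θ m n • Dθ a := by
    have hav := hcomm (a ⊗ₜ[ℂ] v) (Submodule.subset_span ⟨m, n, a, v, ha, hv, rfl⟩)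
    rw [hL m n a v ha hv, map_smul] at hav
    exact tmul_left_injective_of_ne_zero hv0 hav
  have hat : a ∈ totalDeg 𝒜 n := le_totalDeg (by simp) ha
  rw [hD n a hat, hDθ n a hat] at hDa
  exact smul_component_mem_of_intertwined hφ hstp hscale hφbar hL1 hω hωc hωθ hn0 hk hphase ha hDa

/-- if `θ` is irrational, `Vⁿ ≠ 0` for some `n ≠ 0`, and the connection
`ω = ω⁰ + α ∈ Con(A,δ)` is not `O(T²)`-coinvariant, then the left `B`-module
isomorphism `L_V : E_A(V) → E_{A_θ}(V)` does not intertwine the associated connections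
`∇̄(a⊗v) = D̄(a)⊗v` and `∇̄_θ(a⊗v) = D̄_θ(a)⊗v`: one has `(L¹⊗id) ∘ ∇̄ ≠ ∇̄_θ ∘ L_V`. -/
theorem associated_connections_not_intertwined
    (A : Type) [CommRing A] [Algebra ℂ A]
    (𝒜 : ℤ × ℤ → Submodule ℂ A) [GradedAlgebra 𝒜]
    (z1 z2 z1s z2s : A)
    (hz1 : z1 ∈ 𝒜 (1, 0)) (hz2 : z2 ∈ 𝒜 (0, 1))
    (hz1s : z1s ∈ 𝒜 (-1, 0)) (hz2s : z2s ∈ 𝒜 (0, -1))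
    (hrel : z1s * z1 + z2s * z2 = 1)
    (huniv : ∀ (C : Type) [CommRing C] [Algebra ℂ C] (w1 w2 w1s w2s : C),
      w1s * w1 + w2s * w2 = 1 →
      ∃! f : A →ₐ[ℂ] C, f z1 = w1 ∧ f z2 = w2 ∧ f z1s = w1s ∧ f z2s = w2s)
    (θ : ℝ) (hθ : Irrational θ)
    (stp : A →ₗ[ℂ] A →ₗ[ℂ] A)
    (hstp : ∀ (p q : ℤ × ℤ), ∀ a ∈ 𝒜 p, ∀ a' ∈ 𝒜 q, stp a a' = phase θ p q • (a * a'))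
    (bmul : A ⊗[ℂ] A →ₗ[ℂ] A ⊗[ℂ] A →ₗ[ℂ] A ⊗[ℂ] A)
    (hbmul : ∀ (p p' u u' : ℤ × ℤ), ∀ a ∈ 𝒜 p, ∀ a' ∈ 𝒜 p', ∀ c ∈ 𝒜 u, ∀ c' ∈ 𝒜 u',
      bmul (a ⊗ₜ[ℂ] a') (c ⊗ₜ[ℂ] c')
        = rphase θ u p' • ((stp a c) ⊗ₜ[ℂ] (stp a' c')))
    (φ : A ⊗[ℂ] A →ₗ[ℂ] A ⊗[ℂ] A)
    (hφ : ∀ (p q : ℤ × ℤ), ∀ a ∈ 𝒜 p, ∀ a' ∈ 𝒜 q,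
      φ (a ⊗ₜ[ℂ] a') = phase θ p q • (a ⊗ₜ[ℂ] a'))
    -- the `ℤ`-graded vector space `V`, with non-trivial coaction
    (V : Type) [AddCommGroup V] [Module ℂ V]
    (𝒱 : ℤ → Submodule ℂ V) [DirectSum.Decomposition 𝒱]
    (hV : ∃ n : ℤ, n ≠ 0 ∧ 𝒱 n ≠ ⊥)
    -- the natural isomorphism `L_V`
    (L : A ⊗[ℂ] V →ₗ[ℂ] A ⊗[ℂ] V)
    (hL : ∀ (m n : ℤ) (a : A) (v : V), a ∈ 𝒜 (m + n, -m) → v ∈ 𝒱 n →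
      L (a ⊗ₜ[ℂ] v) = lphase θ m n • (a ⊗ₜ[ℂ] v)) :
    ∀ (K K2 Kθ K2θ : Submodule ℂ (A ⊗[ℂ] A)) (ωrep ωθrep : A ⊗[ℂ] A)
      (BdB : Submodule ℂ (A ⊗[ℂ] A)),
      K = LinearMap.ker (LinearMap.mul' ℂ A) →
      K2 = K * K →
      Kθ = LinearMap.ker (TensorProduct.lift stp) →
      K2θ = Submodule.span ℂ {y : A ⊗[ℂ] A | ∃ x ∈ Kθ, ∃ x' ∈ Kθ, y = bmul x x'} →
      ωrep = z1s ⊗ₜ[ℂ] z1 - (z1s * z1) ⊗ₜ[ℂ] (1 : A)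
        + (z2s ⊗ₜ[ℂ] z2 - (z2s * z2) ⊗ₜ[ℂ] (1 : A)) →
      ωθrep = (stp z1s 1) ⊗ₜ[ℂ] z1 - (stp z1s z1) ⊗ₜ[ℂ] (1 : A)
        + ((stp z2s 1) ⊗ₜ[ℂ] z2 - (stp z2s z2) ⊗ₜ[ℂ] (1 : A)) →
      BdB = Submodule.span ℂ {y : A ⊗[ℂ] A | ∃ b ∈ totalDeg 𝒜 0, ∃ b' ∈ totalDeg 𝒜 0,
        y = b ⊗ₜ[ℂ] b' - (b * b') ⊗ₜ[ℂ] (1 : A)} →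
      -- the non-`O(T²)`-coinvariant gauge potential `α ∈ Ω¹(B)`
      ∀ (αr : A ⊗[ℂ] A), αr ∈ BdB →
      ∀ (s : Finset ℤ) (αc : ℤ → A ⊗[ℂ] A),
        αr = ∑ m' ∈ s, αc m' →
        (∀ m' ∈ s, αc m' ∈ tensorDeg 𝒜 (m', -m')) →
        (∃ m' ∈ s, m' ≠ 0 ∧ K2.mkQ (αc m') ≠ 0) →
      ∀ (lact : A → ((A ⊗[ℂ] A) ⧸ K2) →ₗ[ℂ] ((A ⊗[ℂ] A) ⧸ K2)),
        (∀ (a : A) (x : A ⊗[ℂ] A), lact a (K2.mkQ x)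
          = K2.mkQ (TensorProduct.map (LinearMap.mulLeft ℂ a) LinearMap.id x)) →
      ∀ (lactθ : A → ((A ⊗[ℂ] A) ⧸ K2θ) →ₗ[ℂ] ((A ⊗[ℂ] A) ⧸ K2θ)),
        (∀ (a : A) (x : A ⊗[ℂ] A), lactθ a (K2θ.mkQ x)
          = K2θ.mkQ (TensorProduct.map (stp a) LinearMap.id x)) →
      ∀ (D : A →ₗ[ℂ] ((A ⊗[ℂ] A) ⧸ K2)),
        (∀ (n : ℤ), ∀ a ∈ totalDeg 𝒜 n,
          D a = K2.mkQ ((1 : A) ⊗ₜ[ℂ] a - a ⊗ₜ[ℂ] (1 : A))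
            - (n : ℂ) • lact a (K2.mkQ (ωrep + αr))) →
      ∀ (Dθ : A →ₗ[ℂ] ((A ⊗[ℂ] A) ⧸ K2θ)),
        (∀ (n : ℤ), ∀ a ∈ totalDeg 𝒜 n,
          Dθ a = K2θ.mkQ ((1 : A) ⊗ₜ[ℂ] a - a ⊗ₜ[ℂ] (1 : A))
            - (n : ℂ) • lactθ a (K2θ.mkQ (ωθrep + αr))) →
      ∀ (φbar : ((A ⊗[ℂ] A) ⧸ K2θ) →ₗ[ℂ] ((A ⊗[ℂ] A) ⧸ K2)),
        (∀ x : A ⊗[ℂ] A, φbar (K2θ.mkQ x) = K2.mkQ (φ x)) →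
      ∀ (L1 : ((A ⊗[ℂ] A) ⧸ K2) →ₗ[ℂ] ((A ⊗[ℂ] A) ⧸ K2θ)),
        (∀ (m n : ℤ), ∀ x ∈ tensorDeg 𝒜 (m + n, -m),
          φbar (L1 (K2.mkQ x)) = lphase θ m n • K2.mkQ x) →
      -- conclusion: `(L¹ ⊗ id) ∘ ∇̄ ≠ ∇̄_θ ∘ L_V` on `E_A(V)`
      ∃ ξ ∈ assocModule 𝒜 𝒱,
        TensorProduct.map L1 (LinearMap.id : V →ₗ[ℂ] V)
            (TensorProduct.map D (LinearMap.id : V →ₗ[ℂ] V) ξ)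
          ≠ TensorProduct.map Dθ (LinearMap.id : V →ₗ[ℂ] V) (L ξ) := by
  intro K K2 Kθ K2θ ωrep ωθrep BdB hK hK2 _ _ hω hωθ hBdB αr hαr s αc hα hαc ⟨k, hks, hk0, hαk⟩
    lact hlact lactθ hlactθ D hD Dθ hDθ φbar hφbar L1 hL1
  subst hK hBdB
  obtain ⟨n, hn0, hn⟩ := hV
  have hω0 : ωrep ∈ tensorDeg 𝒜 0 := hω ▸
    canonicalConnection_mem_tensorDeg_zero (p := (1, 0)) (q := (0, 1)) hz1 hz2 hz1s hz2s
  have hωθω : ωθrep = ωrep := hωθ.trans <| .trans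
    (IsStarProduct.canonicalConnection_eq (p := (1, 0)) (q := (0, 1)) hstp hz1 hz2 hz1s hz2s)
    hω.symm
  have hφω : φ (ωθrep + αr) = ωrep + αr := by
    rw [map_add, hωθω, IsPhaseMap.apply_of_mem_tensorDeg_zero hφ hω0,
      IsPhaseMap.apply_of_mem_span_base hφ hαr]
  obtain ⟨t, ωc, hsum, hωc, hαt⟩ :=
    exists_sum_eq_add_sum_of_mem (W := fun i ↦ tensorDeg 𝒜 (i, -i)) (i₀ := 0) hω0 hαc
  obtain ⟨hkt, hωk⟩ := hαt k hks hk0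
  refine associated_connections_not_intertwined_general hstp hφ hL hn
    (span_totalDeg_eq_top_of_sphere_relation hz1 hz2 hz1s hz2s hrel n) hK2 hφω
    (by rw [hα, hsum]) hωc hkt (by rwa [hωk])
    (fun N ↦ by exact_mod_cast (hθ.mul_intCast (mul_ne_zero hk0 hn0)).ne_int N)
    (fun n a ha ↦ ?_) (fun n a ha ↦ ?_) hφbar hL1
  · rw [hD n a ha, hlact, map_mulLeft_id_apply, ← map_smul, ← map_sub]
  · rw [hDθ n a ha, hlactθ, ← map_smul, ← map_sub]
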